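/- arXiv:2506.18761 — 4 statements merged into one kernel-verified Lean document; each statement's English description precedes it below -/
import Mathlib

section
/- There exists a universal constant C > 0 with the following property. Let D be an integer with D > (576 log 2)³ + 3 and σ, R > 0 with R² > σ²(D−1). Set s⋆ = √(R² − σ²(D−3)) and ν² = σ⁴(D−3)/(2s⋆²), and suppose 576 log(2) · σ² D^{2/3} ≤ s⋆² ≤ 3σ²D. Then for all s with 0 ≤ s ≤ s⋆ + (1/12) σ (D−3)^{1/6}, one has [φ ∗ (−h')](s) / [φ ∗ h](s) ≤ C · max{ 1/ν, (s − s⋆)/ν² }. -/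
/-!
Write `S = s⋆`, `n = D - 3`, `a = n / 2` and `m = max ν (s - S)`, so that the asserted bound is a
multiple of `m / ν ^ 2`.

*From the hazard rate to the convolution.* Let `w = s + ν`. Below `w`, a bound `-h' ≤ K h` on the
hazard rate contributes at most `K (φ ∗ h)(s)`. Above `w`, the Gaussian weight is at most `φ(ν)` and
`-h'` integrates to `h(w)`, for a total of at most `φ(ν) h(w)`. Since both `φ(· - s)` and `h`
decrease on `(s, w]`, that window alone gives `(φ ∗ h)(s) ≥ ν φ(ν) h(w)`. So the ratio is at most
`K + 1 / ν`, and `1 / ν ≤ m / ν ^ 2`.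

*The hazard rate.* With `x = (R² - u²) / (2σ²)`, the hazard rate at `u` is `(u / σ²) g(x) / ∫₀ˣ g`
for `g(t) = t ^ a * exp (-t)`, whose mode `a` corresponds to `u = S`. If `x ≥ a - y` with
`0 ≤ y ≤ a / 4`, then `g ≥ g(x) / e` on a window of length `a / (4 (y + √a))` to the left of `x`,
so `g(x) / ∫₀ˣ g ≤ 4e (y + √a) / a`. For `u ≤ w` one may take `y ≤ 3 S m / σ²`, and
`√a = ν S / σ²`; this gives `K = 32e m / ν ^ 2`.
-/

open MeasureTheory

/-- `h(s) = (1/Γ((D-1)/2)) ∫₀^{max{0,(R²-s²)/(2σ²)}} t^((D-3)/2) e^(-t) dt`, the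
probability that a chi-square random variable with `D-1` degrees of freedom is at
most `(R² - s²)/σ²`. -/
noncomputable def hFun (D : ℕ) (σ R : ℝ) (s : ℝ) : ℝ :=
  (1 / Real.Gamma (((D : ℝ) - 1) / 2)) *
    ∫ t in (0 : ℝ)..(max 0 ((R ^ 2 - s ^ 2) / (2 * σ ^ 2))),
      t ^ (((D : ℝ) - 3) / 2) * Real.exp (-t)

/-- The negative derivative `-h'(s)` of `h`, extended by `0` outside `(0, R)`. -/
noncomputable def negDH0 (D : ℕ) (σ R : ℝ) (s : ℝ) : ℝ :=
  if 0 < s ∧ s < R then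
    (1 / Real.Gamma (((D : ℝ) - 1) / 2)) * (s / σ ^ 2) *
      ((R ^ 2 - s ^ 2) / (2 * σ ^ 2)) ^ (((D : ℝ) - 3) / 2) *
      Real.exp (-((R ^ 2 - s ^ 2) / (2 * σ ^ 2)))
  else 0

/-- The centered Gaussian density with standard deviation `σ`. -/
noncomputable def gaussPdf (σ : ℝ) (v : ℝ) : ℝ :=
  (1 / (Real.sqrt (2 * Real.pi) * σ)) * Real.exp (-v ^ 2 / (2 * σ ^ 2))

/-- Convolution `[φ ∗ f](t) = ∫ φ(v) f(t - v) dv` with the Gaussian density. -/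
noncomputable def gaussConv (σ : ℝ) (f : ℝ → ℝ) (t : ℝ) : ℝ :=
  ∫ v : ℝ, gaussPdf σ v * f (t - v)

open Set

section SetIntegral

variable {α : Type*} [MeasurableSpace α] {μ : Measure α} {t : Set α} {p f h : α → ℝ} {K : ℝ}

lemma setIntegral_mul_le_mul_integral_mul (ht : MeasurableSet t) (hK : 0 ≤ K)
    (hpf : IntegrableOn (fun u => p u * f u) t μ) (hph : Integrable (fun u => p u * h u) μ)
    (hp0 : ∀ u, 0 ≤ p u) (hh0 : ∀ u, 0 ≤ h u) (hfh : ∀ u ∈ t, f u ≤ K * h u) :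
    ∫ u in t, p u * f u ∂μ ≤ K * ∫ u, p u * h u ∂μ :=
  calc ∫ u in t, p u * f u ∂μ ≤ ∫ u in t, K * (p u * h u) ∂μ :=
        setIntegral_mono_on hpf (hph.const_mul K).integrableOn ht
          fun u hu => (mul_le_mul_of_nonneg_left (hfh u hu) (hp0 u)).trans_eq (mul_left_comm _ _ _)
    _ = K * ∫ u in t, p u * h u ∂μ := integral_const_mul _ _
    _ ≤ K * ∫ u, p u * h u ∂μ := mul_le_mul_of_nonneg_left
        (setIntegral_le_integral hph (.of_forall fun u => mul_nonneg (hp0 u) (hh0 u))) hK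

lemma setIntegral_mul_le_mul_setIntegral (ht : MeasurableSet t)
    (hpf : IntegrableOn (fun u => p u * f u) t μ) (hf : IntegrableOn f t μ)
    (hf0 : ∀ u ∈ t, 0 ≤ f u) (hpK : ∀ u ∈ t, p u ≤ K) :
    ∫ u in t, p u * f u ∂μ ≤ K * ∫ u in t, f u ∂μ :=
  (setIntegral_mono_on hpf (hf.const_mul K) ht fun u hu =>
    mul_le_mul_of_nonneg_right (hpK u hu) (hf0 u hu)).trans_eq (integral_const_mul _ _)

end SetIntegral

section HazardRate

variable {p f h : ℝ → ℝ} {s w K : ℝ}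

lemma sub_mul_le_integral_of_antitoneOn (hsw : s ≤ w) (hf : Integrable f) (hf0 : ∀ u, 0 ≤ f u)
    (hanti : AntitoneOn f (Icc s w)) : (w - s) * f w ≤ ∫ u, f u :=
  calc (w - s) * f w = f w * volume.real (Ioc s w) := by
        rw [Real.volume_real_Ioc_of_le hsw, mul_comm]
    _ ≤ ∫ u in Ioc s w, f u :=
        setIntegral_ge_of_const_le_real measurableSet_Ioc measure_Ioc_lt_top.ne
          (fun _ hu => hanti (Ioc_subset_Icc_self hu) (right_mem_Icc.2 hsw) hu.2) hf.integrableOn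
    _ ≤ ∫ u, f u := setIntegral_le_integral hf (.of_forall hf0)

lemma integral_mul_le_of_hazard_le (hsw : s < w) (hK : 0 ≤ K)
    (hpf : Integrable fun u => p u * f u) (hph : Integrable fun u => p u * h u)
    (hf : IntegrableOn f (Ioi w)) (hp0 : ∀ u, 0 ≤ p u) (hf0 : ∀ u > w, 0 ≤ f u)
    (hh0 : ∀ u, 0 ≤ h u) (hp : AntitoneOn p (Ici s)) (hh : AntitoneOn h (Icc s w))
    (hfh : ∀ u ≤ w, f u ≤ K * h u) (htail : ∫ u in Ioi w, f u ≤ h w) :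
    ∫ u, p u * f u ≤ (K + 1 / (w - s)) * ∫ u, p u * h u := by
  have left_le := setIntegral_mul_le_mul_integral_mul measurableSet_Iic hK hpf.integrableOn hph
    hp0 hh0 hfh
  have right_le : ∫ u in Ioi w, p u * f u ≤ p w * h w :=
    (setIntegral_mul_le_mul_setIntegral measurableSet_Ioi hpf.integrableOn hf hf0 fun u hu =>
      hp hsw.le (hsw.le.trans (le_of_lt hu)) (le_of_lt hu)).trans
      (mul_le_mul_of_nonneg_left htail (hp0 w))
  have window_le : (w - s) * (p w * h w) ≤ ∫ u, p u * h u :=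
    sub_mul_le_integral_of_antitoneOn hsw.le hph (fun u => mul_nonneg (hp0 u) (hh0 u))
      fun u hu v hv huv => mul_le_mul (hp hu.1 hv.1 huv) (hh hu hv huv) (hh0 v) (hp0 u)
  calc ∫ u, p u * f u = (∫ u in Iic w, p u * f u) + ∫ u in Ioi w, p u * f u := by
        rw [← compl_Iic, integral_add_compl measurableSet_Iic hpf]
    _ ≤ K * (∫ u, p u * h u) + p w * h w := add_le_add left_le right_le
    _ ≤ K * (∫ u, p u * h u) + (∫ u, p u * h u) / (w - s) := by
        gcongr
        rwa [le_div_iff₀' (sub_pos.2 hsw)]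
    _ = (K + 1 / (w - s)) * ∫ u, p u * h u := by ring

end HazardRate

section GaussConv

variable {σ : ℝ} {f h : ℝ → ℝ} {s w K : ℝ}

lemma gaussPdf_nonneg (hσ : 0 ≤ σ) (u : ℝ) : 0 ≤ gaussPdf σ u := by
  unfold gaussPdf
  positivity

lemma gaussPdf_neg (u : ℝ) : gaussPdf σ (-u) = gaussPdf σ u := by
  simp only [gaussPdf, neg_sq]

lemma continuous_gaussPdf : Continuous (gaussPdf σ) := by
  unfold gaussPdf
  fun_prop

lemma gaussPdf_le_of_sq_le (hσ : 0 ≤ σ) {u v : ℝ} (huv : u ^ 2 ≤ v ^ 2) :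
    gaussPdf σ v ≤ gaussPdf σ u := by
  unfold gaussPdf
  gcongr

lemma antitoneOn_gaussPdf_sub (hσ : 0 ≤ σ) : AntitoneOn (fun u => gaussPdf σ (u - s)) (Ici s) :=
  fun _ hu _ _ huv =>
    gaussPdf_le_of_sq_le hσ (pow_le_pow_left₀ (sub_nonneg.2 hu) (sub_le_sub_right huv s) 2)

lemma integrable_gaussPdf_sub_mul (hσ : 0 ≤ σ) (hf : Integrable f) :
    Integrable fun u => gaussPdf σ (u - s) * f u := by
  refine hf.bdd_mul (c := gaussPdf σ 0)
    (continuous_gaussPdf.comp (by fun_prop)).aestronglyMeasurable (.of_forall fun u => ?_)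
  rw [Real.norm_of_nonneg (gaussPdf_nonneg hσ _)]
  exact gaussPdf_le_of_sq_le hσ (by rw [zero_pow two_ne_zero]; positivity)

lemma gaussConv_eq_integral_sub (f : ℝ → ℝ) (s : ℝ) :
    gaussConv σ f s = ∫ u, gaussPdf σ (u - s) * f u := by
  rw [← integral_sub_left_eq_self (fun u => gaussPdf σ (u - s) * f u) volume s]
  simp only [gaussConv, sub_sub_cancel_left, gaussPdf_neg]

lemma gaussConv_nonneg (hσ : 0 ≤ σ) (hf0 : ∀ u, 0 ≤ f u) : 0 ≤ gaussConv σ f s :=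
  integral_nonneg fun v => mul_nonneg (gaussPdf_nonneg hσ v) (hf0 (s - v))

lemma gaussConv_le_of_hazard_le (hσ : 0 ≤ σ) (hsw : s < w) (hK : 0 ≤ K) (hf : Integrable f)
    (hh : Integrable h) (hf0 : ∀ u > w, 0 ≤ f u) (hh0 : ∀ u, 0 ≤ h u)
    (hanti : AntitoneOn h (Icc s w)) (hfh : ∀ u ≤ w, f u ≤ K * h u)
    (htail : ∫ u in Ioi w, f u ≤ h w) :
    gaussConv σ f s ≤ (K + 1 / (w - s)) * gaussConv σ h s := by
  rw [gaussConv_eq_integral_sub, gaussConv_eq_integral_sub]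
  exact integral_mul_le_of_hazard_le hsw hK (integrable_gaussPdf_sub_mul hσ hf)
    (integrable_gaussPdf_sub_mul hσ hh) hf.integrableOn (fun u => gaussPdf_nonneg hσ _) hf0 hh0
    (antitoneOn_gaussPdf_sub hσ) hanti hfh htail

end GaussConv

section LowerGamma

/-- The unnormalized Gamma density `t ^ a * exp (-t)`, indexed by its mode `a` rather than by the
shape parameter `a + 1`. -/
noncomputable def gammaKernel (a t : ℝ) : ℝ := t ^ a * Real.exp (-t)

/-- The lower incomplete Gamma function `γ(a + 1, x)`, indexed by the mode `a` of its integrand. -/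
noncomputable def lowerGamma (a x : ℝ) : ℝ := ∫ t in (0 : ℝ)..x, gammaKernel a t

variable {a t x y : ℝ}

lemma gammaKernel_nonneg (ht : 0 ≤ t) : 0 ≤ gammaKernel a t :=
  mul_nonneg (Real.rpow_nonneg ht a) (Real.exp_pos _).le

lemma continuous_gammaKernel (ha : 0 ≤ a) : Continuous (gammaKernel a) :=
  (Real.continuous_rpow_const ha).mul (by fun_prop)

lemma lowerGamma_nonneg (hx : 0 ≤ x) : 0 ≤ lowerGamma a x :=
  intervalIntegral.integral_nonneg hx fun _ ht => gammaKernel_nonneg ht.1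

lemma hasDerivAt_lowerGamma (ha : 0 ≤ a) (x : ℝ) :
    HasDerivAt (lowerGamma a) (gammaKernel a x) x :=
  ((continuous_gammaKernel ha).integral_hasStrictDerivAt 0 x).hasDerivAt

lemma continuous_lowerGamma (ha : 0 ≤ a) : Continuous (lowerGamma a) :=
  continuous_iff_continuousAt.2 fun x => (hasDerivAt_lowerGamma ha x).continuousAt

lemma lowerGamma_sub (ha : 0 ≤ a) (x y : ℝ) :
    lowerGamma a y - lowerGamma a x = ∫ t in x..y, gammaKernel a t :=
  intervalIntegral.integral_interval_sub_left
    ((continuous_gammaKernel ha).intervalIntegrable _ _)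
    ((continuous_gammaKernel ha).intervalIntegrable _ _)

lemma monotoneOn_lowerGamma (ha : 0 ≤ a) : MonotoneOn (lowerGamma a) (Ici 0) := by
  intro x hx y _ hxy
  rw [← sub_nonneg, lowerGamma_sub ha]
  exact intervalIntegral.integral_nonneg hxy fun t ht => gammaKernel_nonneg (hx.trans ht.1)

lemma sub_mul_le_lowerGamma (ha : 0 ≤ a) (ht : 0 ≤ t) (htx : t ≤ x) {c : ℝ}
    (hc : ∀ r ∈ Icc t x, c ≤ gammaKernel a r) : (x - t) * c ≤ lowerGamma a x := by
  have hcont := continuous_gammaKernel ha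
  calc (x - t) * c = ∫ _ in t..x, c := by rw [intervalIntegral.integral_const, smul_eq_mul]
    _ ≤ ∫ r in t..x, gammaKernel a r :=
        intervalIntegral.integral_mono_on htx intervalIntegrable_const
          (hcont.intervalIntegrable _ _) hc
    _ = lowerGamma a x - lowerGamma a t := (lowerGamma_sub ha t x).symm
    _ ≤ lowerGamma a x := sub_le_self _ (lowerGamma_nonneg ht)

lemma gammaKernel_le_exp_mul (ha : 0 ≤ a) (ht : 0 < t) (hx : 0 < x) :
    gammaKernel a x ≤ Real.exp ((x - t) * (a - t) / t) * gammaKernel a t := by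
  have hlog : Real.log x - Real.log t ≤ (x - t) / t := by
    rw [← Real.log_div hx.ne' ht.ne', sub_div, div_self ht.ne']
    exact Real.log_le_sub_one_of_pos (div_pos hx ht)
  have hexponent : Real.log x * a - x ≤ (x - t) * (a - t) / t + (Real.log t * a - t) := by
    have : (x - t) * (a - t) / t = (x - t) / t * a - (x - t) := by field_simp
    linarith [mul_le_mul_of_nonneg_right hlog ha]
  simpa only [gammaKernel, Real.rpow_def_of_pos hx, Real.rpow_def_of_pos ht, ← Real.exp_add,
    Real.exp_le_exp, sub_eq_add_neg] using hexponent

lemma gammaKernel_le_mul_lowerGamma (ha : 1 / 4 ≤ a) (hy : 0 ≤ y) (hya : y ≤ a / 4)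
    (hx : a - y ≤ x) :
    gammaKernel a x ≤ 4 * Real.exp 1 * (y + √a) / a * lowerGamma a x := by
  have ha0 : 0 < a := by linarith
  have hsqrt : 0 < √a := Real.sqrt_pos.2 ha0
  have hsq : √a * √a = a := Real.mul_self_sqrt ha0.le
  set δ := a / (4 * (y + √a)) with hδ
  have hδ0 : 0 < δ := by positivity
  have hδ_mul : δ * (y + √a) = a / 4 := by rw [hδ]; field_simp
  have hδ_sqrt : δ ≤ √a / 4 := by nlinarith [mul_nonneg hδ0.le hy]
  have hsqrt_le : √a ≤ 2 * a := by nlinarith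
  have hwindow : ∀ t ∈ Icc (x - δ) x, Real.exp (-1) * gammaKernel a x ≤ gammaKernel a t := by
    intro t ⟨hxt, htx⟩
    have hat : a / 4 ≤ t := by linarith
    have ht0 : 0 < t := by linarith
    have hprod : (x - t) * (a - t) ≤ t := by
      rcases le_total a t with h | h
      · exact (mul_nonpos_of_nonneg_of_nonpos (by linarith) (by linarith)).trans ht0.le
      · calc (x - t) * (a - t) ≤ δ * (y + √a) := by
              apply mul_le_mul <;> linarith
          _ ≤ t := hδ_mul.trans_le hat
    rw [Real.exp_neg, inv_mul_le_iff₀ (Real.exp_pos 1)]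
    refine (gammaKernel_le_exp_mul ha0.le ht0 (ht0.trans_le htx)).trans ?_
    gcongr
    · exact gammaKernel_nonneg ht0.le
    · exact (div_le_one ht0).2 hprod
  have hint : δ * (Real.exp (-1) * gammaKernel a x) ≤ lowerGamma a x := by
    simpa only [sub_sub_cancel] using
      sub_mul_le_lowerGamma ha0.le (by linarith) (by linarith) hwindow
  calc gammaKernel a x
      = 4 * Real.exp 1 * (y + √a) / a * (δ * (Real.exp (-1) * gammaKernel a x)) := by
        rw [hδ, Real.exp_neg]; field_simp
    _ ≤ 4 * Real.exp 1 * (y + √a) / a * lowerGamma a x := by gcongr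

end LowerGamma

section ChiSquare

variable {D : ℕ} {σ R u w : ℝ}

/-- The value `(R² - u²) / (2σ²)` at which the incomplete Gamma function is evaluated in `hFun`. -/
noncomputable def gammaArg (σ R u : ℝ) : ℝ := (R ^ 2 - u ^ 2) / (2 * σ ^ 2)

/-- The formula for `-h'` on `(0, R)`, as a function on the whole line. It is continuous for
`D ≥ 3`, whereas `negDH0` jumps at `R` when `D = 3`. -/
noncomputable def negDerivFormula (D : ℕ) (σ R u : ℝ) : ℝ :=
  1 / Real.Gamma (((D : ℝ) - 1) / 2) * (u / σ ^ 2) *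
    gammaKernel (((D : ℝ) - 3) / 2) (gammaArg σ R u)

lemma gammaArg_nonneg (h : |u| ≤ |R|) : 0 ≤ gammaArg σ R u :=
  div_nonneg (sub_nonneg.2 (sq_le_sq.2 h)) (by positivity)

lemma gammaArg_nonpos (h : |R| ≤ |u|) : gammaArg σ R u ≤ 0 :=
  div_nonpos_of_nonpos_of_nonneg (sub_nonpos.2 (sq_le_sq.2 h)) (by positivity)

lemma continuous_gammaArg : Continuous (gammaArg σ R) := by
  unfold gammaArg
  fun_prop

lemma hasDerivAt_gammaArg (u : ℝ) : HasDerivAt (gammaArg σ R) (-(u / σ ^ 2)) u := by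
  refine (((hasDerivAt_pow 2 u).const_sub (R ^ 2)).div_const (2 * σ ^ 2)).congr_deriv ?_
  rw [Nat.cast_ofNat, pow_one, neg_div, mul_div_mul_left _ _ two_ne_zero]

lemma half_sub_three_nonneg (hD : 3 ≤ D) : 0 ≤ ((D : ℝ) - 3) / 2 := by
  have : (3 : ℝ) ≤ D := mod_cast hD
  linarith

lemma one_div_Gamma_half_nonneg (hD : 1 ≤ D) : 0 ≤ 1 / Real.Gamma (((D : ℝ) - 1) / 2) := by
  have : (1 : ℝ) ≤ D := mod_cast hD
  exact one_div_nonneg.2 (Real.Gamma_nonneg_of_nonneg (by linarith))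

lemma hFun_eq_lowerGamma (u : ℝ) :
    hFun D σ R u = 1 / Real.Gamma (((D : ℝ) - 1) / 2) *
      lowerGamma (((D : ℝ) - 3) / 2) (max 0 (gammaArg σ R u)) := rfl

lemma hFun_nonneg (hD : 1 ≤ D) (u : ℝ) : 0 ≤ hFun D σ R u :=
  mul_nonneg (one_div_Gamma_half_nonneg hD) (lowerGamma_nonneg (le_max_left _ _))

lemma continuous_hFun (hD : 3 ≤ D) : Continuous (hFun D σ R) :=
  continuous_const.mul ((continuous_lowerGamma (half_sub_three_nonneg hD)).comp
    (continuous_const.max continuous_gammaArg))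

lemma antitoneOn_hFun (hD : 3 ≤ D) : AntitoneOn (hFun D σ R) (Ici 0) := by
  intro u hu v _ huv
  rw [hFun_eq_lowerGamma, hFun_eq_lowerGamma]
  refine mul_le_mul_of_nonneg_left ?_ (one_div_Gamma_half_nonneg (by lia))
  refine monotoneOn_lowerGamma (half_sub_three_nonneg hD) (mem_Ici.2 (le_max_left _ _))
    (mem_Ici.2 (le_max_left _ _)) ?_
  have : u ^ 2 ≤ v ^ 2 := pow_le_pow_left₀ hu huv 2
  unfold gammaArg
  gcongr

lemma hFun_eq_zero (hu : |R| ≤ |u|) : hFun D σ R u = 0 := by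
  rw [hFun_eq_lowerGamma, max_eq_left (gammaArg_nonpos hu), lowerGamma,
    intervalIntegral.integral_same, mul_zero]

lemma integrable_hFun (hD : 3 ≤ D) : Integrable (hFun D σ R) := by
  refine (continuous_hFun hD).integrable_of_hasCompactSupport ?_
  refine HasCompactSupport.intro (isCompact_Icc (a := -|R|) (b := |R|)) fun u hu => hFun_eq_zero ?_
  exact (not_le.1 fun h => hu (abs_le.1 h)).le

lemma negDH0_eq_indicator : negDH0 D σ R = (Ioo 0 R).indicator (negDerivFormula D σ R) := by
  funext u
  simp only [negDH0, negDerivFormula, gammaKernel, gammaArg, indicator, mem_Ioo, mul_assoc]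

lemma negDH0_of_nonpos (hu : u ≤ 0) : negDH0 D σ R u = 0 :=
  if_neg fun h => h.1.not_ge hu

lemma continuous_negDerivFormula (hD : 3 ≤ D) : Continuous (negDerivFormula D σ R) :=
  (by fun_prop : Continuous fun u : ℝ => 1 / Real.Gamma (((D : ℝ) - 1) / 2) * (u / σ ^ 2)).mul
    ((continuous_gammaKernel (half_sub_three_nonneg hD)).comp continuous_gammaArg)

lemma negDerivFormula_nonneg (hD : 1 ≤ D) (hu : 0 ≤ u) (hx : 0 ≤ gammaArg σ R u) :
    0 ≤ negDerivFormula D σ R u :=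
  mul_nonneg (mul_nonneg (one_div_Gamma_half_nonneg hD) (by positivity)) (gammaKernel_nonneg hx)

lemma negDH0_nonneg (hD : 1 ≤ D) (u : ℝ) : 0 ≤ negDH0 D σ R u := by
  rw [negDH0_eq_indicator]
  exact indicator_nonneg (fun v hv => negDerivFormula_nonneg hD hv.1.le
    (gammaArg_nonneg (abs_le_abs_of_nonneg hv.1.le hv.2.le))) u

lemma integrable_negDH0 (hD : 3 ≤ D) : Integrable (negDH0 D σ R) := by
  rw [negDH0_eq_indicator, integrable_indicator_iff measurableSet_Ioo]
  exact (continuous_negDerivFormula hD).integrableOn_Icc.mono_set Ioo_subset_Icc_self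

lemma hasDerivAt_mul_lowerGamma_gammaArg (hD : 3 ≤ D) (u : ℝ) :
    HasDerivAt (fun v => 1 / Real.Gamma (((D : ℝ) - 1) / 2) *
      lowerGamma (((D : ℝ) - 3) / 2) (gammaArg σ R v)) (-negDerivFormula D σ R u) u := by
  refine (((hasDerivAt_lowerGamma (half_sub_three_nonneg hD) _).comp u
    (hasDerivAt_gammaArg u)).const_mul _).congr_deriv ?_
  unfold negDerivFormula
  ring

lemma integral_negDerivFormula (hD : 3 ≤ D) (hw : |w| ≤ |R|) :
    ∫ u in w..R, negDerivFormula D σ R u = hFun D σ R w := by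
  have hFTC := intervalIntegral.integral_eq_sub_of_hasDerivAt (a := w) (b := R)
    (fun u _ => (hasDerivAt_mul_lowerGamma_gammaArg (σ := σ) (R := R) hD u).neg)
    ((continuous_negDerivFormula hD).neg.neg.intervalIntegrable _ _)
  have hR0 : lowerGamma (((D : ℝ) - 3) / 2) (gammaArg σ R R) = 0 := by
    rw [gammaArg, sub_self, zero_div, lowerGamma, intervalIntegral.integral_same]
  rw [hFun_eq_lowerGamma, max_eq_right (gammaArg_nonneg hw)]
  simpa only [neg_neg, Pi.neg_apply, hR0, mul_zero, neg_zero, zero_sub] using hFTC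

lemma integral_Ioi_negDH0 (hD : 3 ≤ D) (hR : 0 ≤ R) (hw : 0 ≤ w) :
    ∫ u in Ioi w, negDH0 D σ R u = hFun D σ R w := by
  have hset : Ioi w ∩ Ioo 0 R = Ioo w R := by
    ext u
    exact ⟨fun h => ⟨h.1, h.2.2⟩, fun h => ⟨h.1, hw.trans_lt h.1, h.2⟩⟩
  rw [negDH0_eq_indicator, setIntegral_indicator measurableSet_Ioo, hset]
  rcases le_total R w with hRw | hwR
  · rw [Ioo_eq_empty hRw.not_gt, setIntegral_empty, hFun_eq_zero (abs_le_abs_of_nonneg hR hRw)]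
  · rw [← integral_Ioc_eq_integral_Ioo, ← intervalIntegral.integral_of_le hwR,
      integral_negDerivFormula hD (abs_le_abs_of_nonneg hw hwR)]

lemma negDH0_le_mul_hFun {y : ℝ} (hD : 4 ≤ D) (hu : 0 ≤ u) (hy : 0 ≤ y)
    (hya : y ≤ ((D : ℝ) - 3) / 2 / 4) (hx : ((D : ℝ) - 3) / 2 - y ≤ gammaArg σ R u) :
    negDH0 D σ R u ≤ u / σ ^ 2 *
      (4 * Real.exp 1 * (y + √(((D : ℝ) - 3) / 2)) / (((D : ℝ) - 3) / 2)) * hFun D σ R u := by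
  have hD4 : (4 : ℝ) ≤ D := mod_cast hD
  have hx0 : 0 ≤ gammaArg σ R u := by linarith
  calc negDH0 D σ R u ≤ negDerivFormula D σ R u := by
        rw [negDH0_eq_indicator]
        exact indicator_apply_le' (fun _ => le_rfl) fun _ =>
          negDerivFormula_nonneg (by lia) hu hx0
    _ ≤ 1 / Real.Gamma (((D : ℝ) - 1) / 2) * (u / σ ^ 2) *
          (4 * Real.exp 1 * (y + √(((D : ℝ) - 3) / 2)) / (((D : ℝ) - 3) / 2) *
            lowerGamma (((D : ℝ) - 3) / 2) (gammaArg σ R u)) := by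
        exact mul_le_mul_of_nonneg_left (gammaKernel_le_mul_lowerGamma (by linarith) hy hya hx)
          (mul_nonneg (one_div_Gamma_half_nonneg (by lia)) (by positivity))
    _ = _ := by
        rw [hFun_eq_lowerGamma, max_eq_right hx0]
        ring

end ChiSquare

section CriticalRadius

variable {D : ℕ} {σ R S ν d u : ℝ}

lemma hazard_coefficient_le {a : ℝ} (hσ : 0 < σ) (hS : 0 < S) (hν : 0 < ν)
    (hνS : ν * S = σ ^ 2 * √a) (hd : 0 ≤ d) (hu : u ≤ 2 * S) :
    u / σ ^ 2 * (4 * Real.exp 1 * (3 / 2 * S * d / σ ^ 2 + √a) / a) ≤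
      4 * Real.exp 1 * (3 * d + 2 * ν) / ν ^ 2 := by
  have hsqrt : √a = ν * S / σ ^ 2 := by rw [hνS]; field_simp
  have ha : a = (ν * S / σ ^ 2) ^ 2 := by
    have : 0 < √a := by rw [hsqrt]; positivity
    rw [← hsqrt, Real.sq_sqrt (Real.sqrt_pos.1 this).le]
  rw [hsqrt, ha]
  calc u / σ ^ 2 * (4 * Real.exp 1 * (3 / 2 * S * d / σ ^ 2 + ν * S / σ ^ 2) /
          (ν * S / σ ^ 2) ^ 2)
      ≤ 2 * S / σ ^ 2 * (4 * Real.exp 1 * (3 / 2 * S * d / σ ^ 2 + ν * S / σ ^ 2) /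
          (ν * S / σ ^ 2) ^ 2) := by gcongr
    _ = 4 * Real.exp 1 * (3 * d + 2 * ν) / ν ^ 2 := by field_simp

lemma half_sub_three_sub_le_gammaArg (hσ : 0 < σ)
    (hS : S ^ 2 = R ^ 2 - σ ^ 2 * ((D : ℝ) - 3)) (hd : 0 ≤ d) (hdS : d ≤ S) (hu : 0 ≤ u)
    (huS : u ≤ S + d) :
    ((D : ℝ) - 3) / 2 - 3 / 2 * S * d / σ ^ 2 ≤ gammaArg σ R u := by
  have husq : u ^ 2 ≤ S ^ 2 + 3 * S * d :=
    calc u ^ 2 ≤ (S + d) ^ 2 := by gcongr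
      _ = S ^ 2 + 2 * S * d + d * d := by ring
      _ ≤ S ^ 2 + 2 * S * d + S * d := by gcongr
      _ = S ^ 2 + 3 * S * d := by ring
  calc ((D : ℝ) - 3) / 2 - 3 / 2 * S * d / σ ^ 2
      = (σ ^ 2 * ((D : ℝ) - 3) - 3 * S * d) / (2 * σ ^ 2) := by field_simp
    _ ≤ gammaArg σ R u := by
        unfold gammaArg
        gcongr ?_ / _
        linarith

lemma negDH0_le_mul_hFun_of_le_add (hD : 4 ≤ D) (hσ : 0 < σ) (hS : 0 < S)
    (hS2 : S ^ 2 = R ^ 2 - σ ^ 2 * ((D : ℝ) - 3)) (hν : 0 < ν)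
    (hνS : ν * S = σ ^ 2 * √(((D : ℝ) - 3) / 2)) (hd : 0 ≤ d) (hdS : d ≤ S)
    (hSd : 12 * S * d ≤ σ ^ 2 * ((D : ℝ) - 3)) (hu : u ≤ S + d) :
    negDH0 D σ R u ≤ 4 * Real.exp 1 * (3 * d + 2 * ν) / ν ^ 2 * hFun D σ R u := by
  have hh := hFun_nonneg (σ := σ) (R := R) (by lia : 1 ≤ D) u
  rcases le_total u 0 with hu0 | hu0
  · rw [negDH0_of_nonpos hu0]
    positivity
  have hya : 3 / 2 * S * d / σ ^ 2 ≤ ((D : ℝ) - 3) / 2 / 4 := by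
    rw [div_le_iff₀ (by positivity)]
    linarith
  refine (negDH0_le_mul_hFun hD hu0 (by positivity) hya
    (half_sub_three_sub_le_gammaArg hσ hS2 hd hdS hu0 hu)).trans ?_
  gcongr
  exact hazard_coefficient_le hσ hS hν hνS hd (by linarith)

lemma sqrt_div_mul_eq_sq_mul_sqrt_half {n : ℝ} (hS : 0 < S) :
    √(σ ^ 4 * n / (2 * S ^ 2)) * S = σ ^ 2 * √(n / 2) := by
  rw [show σ ^ 4 * n / (2 * S ^ 2) = (σ ^ 2) ^ 2 * (n / 2) / S ^ 2 by ring,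
    Real.sqrt_div' _ (by positivity), Real.sqrt_mul (by positivity), Real.sqrt_sq (by positivity),
    Real.sqrt_sq hS.le, div_mul_cancel₀ _ hS.ne']

lemma max_one_div_div_sq (hν : 0 < ν) (r : ℝ) : max (1 / ν) (r / ν ^ 2) = max ν r / ν ^ 2 := by
  rw [← max_div_div_right (by positivity), sq, div_self_mul_self', one_div]

end CriticalRadius

section Scales

variable {σ N S ν s n : ℝ}

lemma le_div_of_mul_le (hσ : 0 < σ) (hN : 0 < N) (hS : 18 * σ * N ^ 2 ≤ S) (hν : 0 ≤ ν)
    (hνS : ν * S ≤ σ ^ 2 * N ^ 3) : ν ≤ σ * N / 18 := by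
  have : 18 * ν ≤ σ * N := by
    refine le_of_mul_le_mul_right ?_ (by positivity : 0 < σ * N ^ 2)
    calc 18 * ν * (σ * N ^ 2) = ν * (18 * σ * N ^ 2) := by ring
      _ ≤ ν * S := by gcongr
      _ ≤ σ ^ 2 * N ^ 3 := hνS
      _ = σ * N * (σ * N ^ 2) := by ring
  linarith

lemma add_le_two_mul_of_le (hσ : 0 ≤ σ) (hN : 1 ≤ N) (hS : 18 * σ * N ^ 2 ≤ S)
    (hν : ν ≤ σ * N / 18) (hs : s ≤ S + 1 / 12 * σ * N) : s + ν ≤ 2 * S := by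
  have : σ * N ≤ σ * N ^ 2 := by
    gcongr
    exact le_self_pow₀ hN two_ne_zero
  linarith [mul_nonneg hσ (zero_le_one.trans hN)]

lemma twelve_mul_mul_le (hσ : 0 ≤ σ) (hN : 2 ≤ N) (hS0 : 0 ≤ S) (hS : S ≤ 2 * σ * N ^ 3)
    (hν : ν ≤ σ * N / 18) (hs : s ≤ S + 1 / 12 * σ * N) :
    12 * S * (s + ν - S) ≤ σ ^ 2 * N ^ 6 :=
  calc 12 * S * (s + ν - S) ≤ 12 * S * (σ * N / 6) := by
        gcongr
        linarith [mul_nonneg hσ (by linarith : 0 ≤ N)]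
    _ ≤ 12 * (2 * σ * N ^ 3) * (σ * N / 6) := by gcongr
    _ = 2 ^ 2 * (σ ^ 2 * N ^ 4) := by ring
    _ ≤ N ^ 2 * (σ ^ 2 * N ^ 4) := by gcongr
    _ = σ ^ 2 * N ^ 6 := by ring

lemma rpow_one_sixth_pow (hn : 0 ≤ n) (k : ℕ) :
    (n ^ ((1 : ℝ) / 6)) ^ k = n ^ ((k : ℝ) / 6) := by
  rw [← Real.rpow_mul_natCast hn, one_div_mul_eq_div]

lemma rpow_one_sixth_pow_six (hn : 0 ≤ n) : (n ^ ((1 : ℝ) / 6)) ^ 6 = n := by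
  rw [rpow_one_sixth_pow hn, Nat.cast_ofNat, div_self (by norm_num), Real.rpow_one]

lemma two_le_rpow_one_sixth (hn : 64 ≤ n) : 2 ≤ n ^ ((1 : ℝ) / 6) := by
  refine le_of_pow_le_pow_left₀ (n := 6) (by norm_num) (by positivity) ?_
  rw [rpow_one_sixth_pow_six (by linarith)]
  linarith

lemma eighteen_mul_le_of_le_sq (hn : 0 ≤ n) (hS : 0 ≤ S)
    (hlow : 576 * Real.log 2 * σ ^ 2 * (n + 3) ^ ((2 : ℝ) / 3) ≤ S ^ 2) :
    18 * σ * (n ^ ((1 : ℝ) / 6)) ^ 2 ≤ S := by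
  refine le_of_sq_le_sq ?_ hS
  calc (18 * σ * (n ^ ((1 : ℝ) / 6)) ^ 2) ^ 2 = 324 * σ ^ 2 * (n ^ ((1 : ℝ) / 6)) ^ 4 := by ring
    _ = 324 * σ ^ 2 * n ^ ((2 : ℝ) / 3) := by
        rw [rpow_one_sixth_pow hn]
        norm_num
    _ ≤ 576 * Real.log 2 * σ ^ 2 * (n + 3) ^ ((2 : ℝ) / 3) := by
        gcongr
        · linarith [Real.log_two_gt_d9]
        · linarith
    _ ≤ S ^ 2 := hlow

lemma le_two_mul_of_sq_le (hσ : 0 ≤ σ) (hn : 9 ≤ n) (hup : S ^ 2 ≤ 3 * σ ^ 2 * (n + 3)) :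
    S ≤ 2 * σ * (n ^ ((1 : ℝ) / 6)) ^ 3 := by
  refine le_of_sq_le_sq ?_ (by positivity)
  calc S ^ 2 ≤ 3 * σ ^ 2 * (n + 3) := hup
    _ = σ ^ 2 * (3 * n + 9) := by ring
    _ ≤ σ ^ 2 * (3 * n + n) := by gcongr
    _ = (2 * σ) ^ 2 * (n ^ ((1 : ℝ) / 6)) ^ 6 := by
        rw [rpow_one_sixth_pow_six (by linarith)]
        ring
    _ = (2 * σ * (n ^ ((1 : ℝ) / 6)) ^ 3) ^ 2 := by ring

lemma sqrt_half_le_rpow_one_sixth_pow (hn : 0 ≤ n) : √(n / 2) ≤ (n ^ ((1 : ℝ) / 6)) ^ 3 := by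
  rw [Real.sqrt_le_left (by positivity), ← pow_mul, rpow_one_sixth_pow_six hn]
  exact half_le_self hn

lemma add_le_and_mul_le_of_sq_bounds {D : ℝ} (hσ : 0 < σ) (hD : 67 ≤ D) (hS : 0 < S)
    (hν : ν = √(σ ^ 4 * (D - 3) / (2 * S ^ 2)))
    (hlow : 576 * Real.log 2 * σ ^ 2 * D ^ ((2 : ℝ) / 3) ≤ S ^ 2) (hup : S ^ 2 ≤ 3 * σ ^ 2 * D)
    (hs : s ≤ S + 1 / 12 * σ * (D - 3) ^ ((1 : ℝ) / 6)) :
    s + ν ≤ 2 * S ∧ 12 * S * (s + ν - S) ≤ σ ^ 2 * (D - 3) := by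
  have hD0 : 0 ≤ D - 3 := by linarith
  have hSlow : 18 * σ * ((D - 3) ^ ((1 : ℝ) / 6)) ^ 2 ≤ S :=
    eighteen_mul_le_of_le_sq hD0 hS.le (by rwa [sub_add_cancel])
  have hSup : S ≤ 2 * σ * ((D - 3) ^ ((1 : ℝ) / 6)) ^ 3 :=
    le_two_mul_of_sq_le hσ.le (by linarith) (by rwa [sub_add_cancel])
  have hN : 2 ≤ (D - 3) ^ ((1 : ℝ) / 6) := two_le_rpow_one_sixth (by linarith)
  have hνN : ν ≤ σ * (D - 3) ^ ((1 : ℝ) / 6) / 18 := by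
    refine le_div_of_mul_le hσ (by positivity) hSlow (hν ▸ Real.sqrt_nonneg _) ?_
    rw [hν, sqrt_div_mul_eq_sq_mul_sqrt_half hS]
    exact mul_le_mul_of_nonneg_left (sqrt_half_le_rpow_one_sixth_pow hD0) (by positivity)
  have hmul := twelve_mul_mul_le hσ.le hN hS.le hSup hνN hs
  rw [rpow_one_sixth_pow_six hD0] at hmul
  exact ⟨add_le_two_mul_of_le hσ.le (by linarith) hSlow hνN hs, hmul⟩

lemma sixty_seven_le_of_lt {D : ℝ} (hD : (576 * Real.log 2) ^ 3 + 3 < D) : 67 ≤ D := by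
  have : (4 : ℝ) ^ 3 ≤ (576 * Real.log 2) ^ 3 := by
    gcongr
    linarith [Real.log_two_gt_d9]
  linarith

end Scales

/-- On `[0, s + ν]`, the two upper bounds on `s` keep the Gamma variable `(R² - u²) / (2σ²)` above
three quarters of its mode. -/
theorem gauss_conv_relative_bound_general {D : ℕ} (hD : 4 ≤ D) {σ R sstar ν s : ℝ} (hσ : 0 < σ)
    (hR : 0 < R) (hRD : σ ^ 2 * ((D : ℝ) - 3) < R ^ 2)
    (hsstar : sstar = √(R ^ 2 - σ ^ 2 * ((D : ℝ) - 3)))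
    (hν : ν = √(σ ^ 4 * ((D : ℝ) - 3) / (2 * sstar ^ 2)))
    (hs0 : 0 ≤ s) (hs : s + ν ≤ 2 * sstar)
    (hs' : 12 * sstar * (s + ν - sstar) ≤ σ ^ 2 * ((D : ℝ) - 3)) :
    gaussConv σ (negDH0 D σ R) s / gaussConv σ (hFun D σ R) s ≤
      (32 * Real.exp 1 + 1) * max (1 / ν) ((s - sstar) / ν ^ 2) := by
  have hD4 : (4 : ℝ) ≤ D := mod_cast hD
  have hS : 0 < sstar := hsstar ▸ Real.sqrt_pos.2 (sub_pos.2 hRD)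
  have hS2 : sstar ^ 2 = R ^ 2 - σ ^ 2 * ((D : ℝ) - 3) := by
    rw [hsstar, Real.sq_sqrt (sub_pos.2 hRD).le]
  have hn : 0 < (D : ℝ) - 3 := by linarith
  have hν0 : 0 < ν := hν ▸ Real.sqrt_pos.2 (by positivity)
  have hνS : ν * sstar = σ ^ 2 * √(((D : ℝ) - 3) / 2) :=
    hν ▸ sqrt_div_mul_eq_sq_mul_sqrt_half hS
  set d := max 0 (s + ν - sstar) with hd
  set m := max ν (s - sstar) with hm
  have hdm : d ≤ 2 * m := max_le (by positivity) (by
    linarith [le_max_left ν (s - sstar), le_max_right ν (s - sstar)])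
  have hSd : 12 * sstar * d ≤ σ ^ 2 * ((D : ℝ) - 3) := by
    rw [hd, mul_max_of_nonneg _ _ (by positivity), mul_zero]
    exact max_le (by positivity) hs'
  have hconv := gaussConv_le_of_hazard_le hσ.le (lt_add_of_pos_right s hν0) (by positivity)
    (integrable_negDH0 (by lia)) (integrable_hFun (by lia)) (fun u _ => negDH0_nonneg (by lia) u)
    (hFun_nonneg (by lia)) ((antitoneOn_hFun (by lia)).mono fun u hu => hs0.trans hu.1)
    (fun u hu => negDH0_le_mul_hFun_of_le_add hD hσ hS hS2 hν0 hνS (le_max_left _ _)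
      (max_le hS.le (by linarith)) hSd (hu.trans (by linarith [le_max_right 0 (s + ν - sstar)])))
    (integral_Ioi_negDH0 (by lia) hR.le (by positivity)).le
  rw [max_one_div_div_sq hν0, ← hm]
  refine div_le_of_le_mul₀ (gaussConv_nonneg hσ.le (hFun_nonneg (by lia))) (by positivity)
    (hconv.trans (mul_le_mul_of_nonneg_right ?_ (gaussConv_nonneg hσ.le (hFun_nonneg (by lia)))))
  calc 4 * Real.exp 1 * (3 * d + 2 * ν) / ν ^ 2 + 1 / (s + ν - s)
      = (4 * Real.exp 1 * (3 * d + 2 * ν) + ν) / ν ^ 2 := by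
        rw [add_sub_cancel_left]
        field_simp
    _ ≤ (4 * Real.exp 1 * (3 * (2 * m) + 2 * m) + m) / ν ^ 2 := by
        gcongr <;> exact le_max_left _ _
    _ = (32 * Real.exp 1 + 1) * (m / ν ^ 2) := by ring

/-- **Relative bounds.** There is a universal constant `C > 0` such that for any
integer `D > (576 log 2)³ + 3`, `σ, R > 0` with `R² > σ²(D-1)`,
`s⋆ = √(R² - σ²(D-3))`, `ν² = σ⁴(D-3)/(2s⋆²)`, and
`576 log 2 · σ² D^(2/3) ≤ s⋆² ≤ 3σ²D`, for all `0 ≤ s ≤ s⋆ + (1/12)σ(D-3)^(1/6)`,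
`[φ ∗ (-h')](s) / [φ ∗ h](s) ≤ C max{1/ν, (s-s⋆)/ν²}`. -/
theorem gauss_conv_relative_bound :
    ∃ C : ℝ, 0 < C ∧
      ∀ (D : ℕ), (576 * Real.log 2) ^ 3 + 3 < (D : ℝ) →
      ∀ (σ R : ℝ), 0 < σ → 0 < R → σ ^ 2 * ((D : ℝ) - 1) < R ^ 2 →
      ∀ (sstar ν : ℝ),
        sstar = Real.sqrt (R ^ 2 - σ ^ 2 * ((D : ℝ) - 3)) →
        ν = Real.sqrt (σ ^ 4 * ((D : ℝ) - 3) / (2 * sstar ^ 2)) →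
        576 * Real.log 2 * σ ^ 2 * (D : ℝ) ^ ((2 : ℝ) / 3) ≤ sstar ^ 2 →
        sstar ^ 2 ≤ 3 * σ ^ 2 * D →
        ∀ s : ℝ, 0 ≤ s → s ≤ sstar + (1 / 12) * σ * ((D : ℝ) - 3) ^ ((1 : ℝ) / 6) →
          gaussConv σ (negDH0 D σ R) s / gaussConv σ (hFun D σ R) s ≤
            C * max (1 / ν) ((s - sstar) / ν ^ 2) := by
  refine ⟨32 * Real.exp 1 + 1, by positivity, ?_⟩
  intro D hD σ R hσ hR hRD sstar ν hsstar hν hlow hup s hs0 hs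
  have hD67 := sixty_seven_le_of_lt hD
  have hRn : σ ^ 2 * ((D : ℝ) - 3) < R ^ 2 := lt_of_le_of_lt (by gcongr; norm_num) hRD
  obtain ⟨hadd, hmul⟩ := add_le_and_mul_le_of_sq_bounds hσ hD67
    (hsstar ▸ Real.sqrt_pos.2 (sub_pos.2 hRn)) hν hlow hup hs
  exact gauss_conv_relative_bound_general (by rify; linarith) hσ hR hRn hsstar hν hs0 hadd hmul
end

section
/- Let D ≥ 2 be an integer and σ, R > 0 with R² > σ²(D−1). Set š⋆ = √(R² − σ²(D−1)) and ν̌² = σ⁴(D−1)/(2š⋆²). Then for every s > š⋆, one has h(s) ≤ exp(−(s − š⋆)²/(2ν̌²)). -/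
/-!
Tilting the Gamma density by `x ↦ exp (t * x)` only changes its rate, which gives the moment
generating function `(r / (r - t)) ^ a`. With `l - l ^ 2 / 2 ≤ log (1 + l)`, the Chernoff bound at
`t = -(l * r)`, `l = r * u / a`, is the subgaussian lower tail of the Gamma distribution at depth
`u` below its mean `a / r`. Now `h(s) = P[X ≤ (R² - s²)/σ²]` for a chi-square variable `X`, and
since `s²` lies above its tangent at `š⋆`, this threshold is at least `2 š⋆ (s - š⋆)/σ²` below the
mean `D - 1 = (R² - š⋆²)/σ²`; at that depth the chi-square tail is exactly the claimed bound.
-/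

open MeasureTheory

open ProbabilityTheory Real Set

lemma sub_sq_div_two_le_log_one_add {l : ℝ} (hl : 0 ≤ l) : l - l ^ 2 / 2 ≤ log (1 + l) := by
  refine le_trans ?_ (le_log_one_add_of_nonneg hl)
  rw [le_div_iff₀ (by linarith)]
  have : 0 ≤ l ^ 3 := by positivity
  linarith

section GammaDistribution

variable {a r : ℝ}

lemma exp_mul_gammaPDFReal (hr : 0 < r) {t : ℝ} (ht : t < r) (x : ℝ) :
    exp (t * x) * gammaPDFReal a r x = (r / (r - t)) ^ a * gammaPDFReal a (r - t) x := by
  have hrt : 0 < r - t := sub_pos.2 ht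
  have hexp : exp (-((r - t) * x)) = exp (t * x) * exp (-(r * x)) := by
    rw [← exp_add]
    ring_nf
  simp only [gammaPDFReal, mul_ite, mul_zero, hexp, div_rpow hr.le hrt.le]
  field_simp

lemma lintegral_exp_mul_gammaMeasure (ha : 0 < a) (hr : 0 < r) {t : ℝ} (ht : t < r) :
    ∫⁻ x, ENNReal.ofReal (exp (t * x)) ∂gammaMeasure a r =
      ENNReal.ofReal ((r / (r - t)) ^ a) := by
  have hrt : 0 < r - t := sub_pos.2 ht
  have hmeas (q : ℝ) : Measurable (gammaPDF a q) := (measurable_gammaPDFReal a q).ennreal_ofReal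
  calc ∫⁻ x, ENNReal.ofReal (exp (t * x)) ∂gammaMeasure a r
      = ∫⁻ x, gammaPDF a r x * ENNReal.ofReal (exp (t * x)) :=
        lintegral_withDensity_eq_lintegral_mul _ (hmeas r) (by fun_prop)
    _ = ∫⁻ x, ENNReal.ofReal ((r / (r - t)) ^ a) * gammaPDF a (r - t) x := by
        refine lintegral_congr fun x ↦ ?_
        rw [gammaPDF, gammaPDF, mul_comm, ← ENNReal.ofReal_mul (by positivity),
          ← ENNReal.ofReal_mul (by positivity), exp_mul_gammaPDFReal hr ht]
    _ = ENNReal.ofReal ((r / (r - t)) ^ a) := by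
        rw [lintegral_const_mul _ (hmeas _), lintegral_gammaPDF_eq_one ha hrt, mul_one]

lemma integrable_exp_mul_gammaMeasure (ha : 0 < a) (hr : 0 < r) {t : ℝ} (ht : t < r) :
    Integrable (fun x ↦ exp (t * x)) (gammaMeasure a r) := by
  refine (lintegral_ofReal_ne_top_iff_integrable (by fun_prop)
    (.of_forall fun x ↦ (exp_pos _).le)).1 ?_
  rw [lintegral_exp_mul_gammaMeasure ha hr ht]
  exact ENNReal.ofReal_ne_top

lemma mgf_id_gammaMeasure (ha : 0 < a) (hr : 0 < r) {t : ℝ} (ht : t < r) :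
    mgf id (gammaMeasure a r) t = (r / (r - t)) ^ a := by
  have := sub_pos.2 ht
  rw [mgf, integral_eq_lintegral_of_nonneg_ae (.of_forall fun x ↦ (exp_pos _).le)
    (by fun_prop)]
  simp only [id, lintegral_exp_mul_gammaMeasure ha hr ht]
  exact ENNReal.toReal_ofReal (by positivity)

lemma gammaMeasure_real_Iic_mean_sub_le (ha : 0 < a) (hr : 0 < r) {u : ℝ} (hu : 0 ≤ u) :
    (gammaMeasure a r).real (Iic (a / r - u)) ≤ exp (-(r * u) ^ 2 / (2 * a)) := by
  have := isProbabilityMeasure_gammaMeasure ha hr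
  set l := r * u / a with hl
  have hl₀ : 0 ≤ l := by positivity
  have hlr : -(l * r) < r := by nlinarith
  calc (gammaMeasure a r).real (Iic (a / r - u))
      ≤ exp (-(-(l * r)) * (a / r - u)) * mgf id (gammaMeasure a r) (-(l * r)) :=
        measure_le_le_exp_mul_mgf (X := id) _ (by nlinarith)
          (integrable_exp_mul_gammaMeasure ha hr hlr)
    _ = exp (-(-(l * r)) * (a / r - u)) * exp (-(a * log (1 + l))) := by
        have htilt : r / (r - -(l * r)) = (1 + l)⁻¹ := by
          rw [show r - -(l * r) = r * (1 + l) by ring, div_mul_cancel_left₀ hr.ne']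
        rw [mgf_id_gammaMeasure ha hr hlr, htilt, rpow_def_of_pos (by positivity), log_inv]
        ring_nf
    _ ≤ exp (-(-(l * r)) * (a / r - u)) * exp (-(a * (l - l ^ 2 / 2))) := by
        gcongr
        exact sub_sq_div_two_le_log_one_add hl₀
    _ = exp (-(r * u) ^ 2 / (2 * a)) := by
        rw [← exp_add, hl]
        congr 1
        field_simp
        ring

lemma setIntegral_Iic_gammaPDFReal (a r x : ℝ) :
    ∫ t in Iic x, gammaPDFReal a r t =
      ∫ t in (0 : ℝ)..max 0 x, r ^ a / Gamma a * t ^ (a - 1) * exp (-(r * t)) := by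
  have hpdf : gammaPDFReal a r =
      (Ici 0).indicator fun t ↦ r ^ a / Gamma a * t ^ (a - 1) * exp (-(r * t)) := by
    ext t
    simp only [gammaPDFReal, indicator_apply, mem_Ici]
  have hIoc : (Iic x ∩ Ici 0 : Set ℝ) =ᵐ[volume] (Ioc 0 (max 0 x) : Set ℝ) := by
    have hmax : Ioc 0 (max 0 x) = Ioc 0 x := by
      ext t
      simp +contextual [not_le_of_gt]
    rw [inter_comm, Ici_inter_Iic, hmax]
    exact Ioc_ae_eq_Icc.symm
  rw [hpdf, setIntegral_indicator measurableSet_Ici, setIntegral_congr_set hIoc,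
    intervalIntegral.integral_of_le (le_max_left 0 x)]

lemma gammaMeasure_real_Iic (ha : 0 < a) (hr : 0 < r) (x : ℝ) :
    (gammaMeasure a r).real (Iic x) =
      1 / Gamma a * ∫ t in (0 : ℝ)..max 0 (r * x), t ^ (a - 1) * exp (-t) := by
  have := isProbabilityMeasure_gammaMeasure ha hr
  have hscale : max 0 (r * x) = r * max 0 x := by
    rw [mul_max_of_nonneg _ _ hr.le, mul_zero]
  rw [← cdf_eq_real, cdf_gammaMeasure_eq_integral ha hr, setIntegral_Iic_gammaPDFReal, hscale,
    ← mul_zero r, ← intervalIntegral.mul_integral_comp_mul_left, mul_zero, ← mul_assoc,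
    ← intervalIntegral.integral_const_mul]
  refine intervalIntegral.integral_congr fun t ht ↦ ?_
  rw [uIcc_of_le (le_max_left 0 x)] at ht
  have hpow : r ^ a = r * r ^ (a - 1) := by
    rw [← rpow_one_add' hr.le (by simpa using ha.ne'), add_sub_cancel]
  simp only [mul_rpow hr.le ht.1, hpow]
  ring

end GammaDistribution

/-- The chi-square distribution with `k` degrees of freedom, for real `k`, encoded as the Gamma
distribution with shape `k / 2` and rate `1 / 2`. It is a probability measure for `0 < k`. -/
noncomputable def chiSquareMeasure (k : ℝ) : Measure ℝ :=
  gammaMeasure (k / 2) (1 / 2)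

lemma isProbabilityMeasure_chiSquareMeasure {k : ℝ} (hk : 0 < k) :
    IsProbabilityMeasure (chiSquareMeasure k) :=
  isProbabilityMeasure_gammaMeasure (half_pos hk) one_half_pos

lemma chiSquareMeasure_real_Iic_sub_le {k u : ℝ} (hk : 0 < k) (hu : 0 ≤ u) :
    (chiSquareMeasure k).real (Iic (k - u)) ≤ exp (-u ^ 2 / (4 * k)) := by
  have hmean : k = k / 2 / (1 / 2) := by ring
  have hexponent : -u ^ 2 / (4 * k) = -(1 / 2 * u) ^ 2 / (2 * (k / 2)) := by field_simp; ring
  calc (chiSquareMeasure k).real (Iic (k - u))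
      = (gammaMeasure (k / 2) (1 / 2)).real (Iic (k / 2 / (1 / 2) - u)) := by
        rw [chiSquareMeasure, ← hmean]
    _ ≤ exp (-(1 / 2 * u) ^ 2 / (2 * (k / 2))) :=
        gammaMeasure_real_Iic_mean_sub_le (half_pos hk) one_half_pos hu
    _ = exp (-u ^ 2 / (4 * k)) := by rw [hexponent]

lemma hFun_eq_chiSquareMeasure_real {D : ℕ} (hD : 2 ≤ D) (σ R s : ℝ) :
    hFun D σ R s = (chiSquareMeasure (D - 1)).real (Iic ((R ^ 2 - s ^ 2) / σ ^ 2)) := by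
  have hk : (0 : ℝ) < D - 1 := sub_pos.2 (mod_cast hD)
  have hshape : ((D : ℝ) - 3) / 2 = (D - 1) / 2 - 1 := by ring
  have hthreshold : (R ^ 2 - s ^ 2) / (2 * σ ^ 2) = 1 / 2 * ((R ^ 2 - s ^ 2) / σ ^ 2) := by ring
  rw [hFun, chiSquareMeasure, gammaMeasure_real_Iic (half_pos hk) one_half_pos, hshape, hthreshold]

theorem h_tail_bound_general {k σ R scheck νcheck s : ℝ} (hk : 0 < k) (hσ : σ ≠ 0)
    (hRk : σ ^ 2 * k < R ^ 2) (hscheck : scheck = √(R ^ 2 - σ ^ 2 * k))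
    (hνcheck : νcheck = √(σ ^ 4 * k / (2 * scheck ^ 2))) (hs : scheck ≤ s) :
    (chiSquareMeasure k).real (Iic ((R ^ 2 - s ^ 2) / σ ^ 2)) ≤
      exp (-(s - scheck) ^ 2 / (2 * νcheck ^ 2)) := by
  have := isProbabilityMeasure_chiSquareMeasure hk
  have hscheck_pos : 0 < scheck := hscheck ▸ sqrt_pos.2 (sub_pos.2 hRk)
  have hscheck_sq : scheck ^ 2 = R ^ 2 - σ ^ 2 * k := hscheck ▸ sq_sqrt (sub_pos.2 hRk).le
  have hνcheck_sq : νcheck ^ 2 = σ ^ 4 * k / (2 * scheck ^ 2) :=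
    hνcheck ▸ sq_sqrt (by positivity)
  set u := 2 * scheck * (s - scheck) / σ ^ 2 with hu
  have hu_nonneg : 0 ≤ u := by have := sub_nonneg.2 hs; positivity
  have hthreshold : (R ^ 2 - s ^ 2) / σ ^ 2 ≤ k - u := by
    have htangent : 2 * scheck * (s - scheck) ≤ s ^ 2 - scheck ^ 2 := by
      nlinarith [sq_nonneg (s - scheck)]
    rw [hu, le_sub_iff_add_le, ← add_div, div_le_iff₀ (by positivity)]
    linarith
  calc (chiSquareMeasure k).real (Iic ((R ^ 2 - s ^ 2) / σ ^ 2))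
      ≤ (chiSquareMeasure k).real (Iic (k - u)) := measureReal_mono (Iic_subset_Iic.2 hthreshold)
    _ ≤ exp (-u ^ 2 / (4 * k)) := chiSquareMeasure_real_Iic_sub_le hk hu_nonneg
    _ = exp (-(s - scheck) ^ 2 / (2 * νcheck ^ 2)) := by
        rw [hνcheck_sq, hu]
        congr 1
        field_simp
        ring

/-- **Subgaussian upper tail for `h`.**  With `š⋆ = √(R² - σ²(D-1))` and
`ν̌² = σ⁴(D-1)/(2š⋆²)`, for every `s > š⋆` one has
`h(s) ≤ exp(-(s - š⋆)²/(2ν̌²))`. -/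
theorem h_tail_bound (D : ℕ) (hD : 2 ≤ D) (σ R : ℝ)
    (hσ : 0 < σ) (hR : 0 < R) (hRD : σ ^ 2 * ((D : ℝ) - 1) < R ^ 2)
    (scheck νcheck : ℝ)
    (hscheck : scheck = Real.sqrt (R ^ 2 - σ ^ 2 * ((D : ℝ) - 1)))
    (hνcheck : νcheck = Real.sqrt (σ ^ 4 * ((D : ℝ) - 1) / (2 * scheck ^ 2)))
    (s : ℝ) (hs : scheck < s) :
    hFun D σ R s ≤ Real.exp (-(s - scheck) ^ 2 / (2 * νcheck ^ 2)) := by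
  rw [hFun_eq_chiSquareMeasure_real hD]
  exact h_tail_bound_general (sub_pos.2 (mod_cast hD)) hσ.ne' hRD hscheck hνcheck hs.le
end

section
/- Let D ≥ 1, N ≥ 1 be integers, κ ≥ 0 a real number, and q ∈ ℝ^D. For i = 1, …, N let c_i : [0,1] → ℝ^D be twice continuously differentiable curves with c_i(0) = q and ‖c_i''(t)‖ ≤ κ ‖c_i'(0)‖² for all t ∈ [0,1], and let c_* : [0,1] → ℝ^D be a twice continuously differentiable curve with c_*(0) = q, c_*'(0) = (1/N) Σ_{i=1}^N c_i'(0), and ‖c_*''(t)‖ ≤ κ ‖c_*'(0)‖² for all t ∈ [0,1]. Then ‖ c_*(1) − (1/N) Σ_{i=1}^N c_i(1) ‖ ≤ (κ/N) Σ_{i=1}^N ‖c_i'(0)‖². -/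
open Set

/-!
Taylor's formula at `0` shows that each endpoint `c_i(1)` misses `q + c_i'(0)` by at most
`κ‖c_i'(0)‖²/2`, and that `c_*(1)` misses `q + c_*'(0)` by at most `κ‖c_*'(0)‖²/2`. The linear
parts of `c_*(1)` and of the average of the `c_i(1)` agree, so only the remainders are left.
Convexity of `‖·‖²` bounds the remainder of `c_*` by the average of the other bounds, and the two
halves add up to the constant `κ`.
-/

section

variable {E ι : Type*} [NormedAddCommGroup E] [NormedSpace ℝ E]

-- Not `taylor_mean_remainder_bound`: its denominator `1!` would double the final constant.
lemma norm_sub_sub_smul_le_of_norm_deriv2_le_segment {f f' f'' : ℝ → E} {a b C : ℝ}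
    (hf : ∀ t ∈ Icc a b, HasDerivWithinAt f (f' t) (Icc a b) t)
    (hf' : ∀ t ∈ Icc a b, HasDerivWithinAt f' (f'' t) (Icc a b) t)
    (bound : ∀ t ∈ Ico a b, ‖f'' t‖ ≤ C) :
    ∀ x ∈ Icc a b, ‖f x - f a - (x - a) • f' a‖ ≤ C / 2 * (x - a) ^ 2 := by
  have remainder_deriv : ∀ t ∈ Icc a b,
      HasDerivWithinAt (fun s ↦ f s - f a - (s - a) • f' a) (f' t - f' a) (Icc a b) t := by
    intro t ht
    simpa only [id_eq, one_smul] using ((hf t ht).sub_const (f a)).fun_sub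
      (((hasDerivWithinAt_id t (Icc a b)).sub_const a).smul_const (f' a))
  have remainder_deriv_le : ∀ t ∈ Ico a b, ‖f' t - f' a‖ ≤ C * (t - a) := fun t ht ↦
    norm_image_sub_le_of_norm_deriv_le_segment' hf' bound t (Ico_subset_Icc_self ht)
  have majorant_deriv (t : ℝ) :
      HasDerivAt (fun s ↦ C / 2 * (s - a) ^ 2) (C * (t - a)) t := by
    refine ((((hasDerivAt_id' t).sub_const a).fun_pow 2).const_mul (C / 2)).congr_deriv ?_
    ring
  exact image_norm_le_of_norm_deriv_right_le_deriv_boundary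
    (fun t ht ↦ (remainder_deriv t ht).continuousWithinAt)
    (fun t ht ↦ (remainder_deriv t (Ico_subset_Icc_self ht)).mono_of_mem_nhdsWithin
      (Icc_mem_nhdsGE_of_mem ht))
    (by simp) majorant_deriv remainder_deriv_le

lemma norm_sum_smul_sq_le {s : Finset ι} {w : ι → ℝ} (hw : ∀ i ∈ s, 0 ≤ w i)
    (hw1 : ∑ i ∈ s, w i = 1) (v : ι → E) :
    ‖∑ i ∈ s, w i • v i‖ ^ 2 ≤ ∑ i ∈ s, w i * ‖v i‖ ^ 2 :=
  ((convexOn_norm convex_univ).pow (fun _ _ ↦ norm_nonneg _) 2).map_sum_le hw hw1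
    fun _ _ ↦ mem_univ _

lemma norm_sub_sum_smul_le {s : Finset ι} {w : ι → ℝ} (hw : ∀ i ∈ s, 0 ≤ w i)
    (hw1 : ∑ i ∈ s, w i = 1) (y q : E) (x v : ι → E) :
    ‖y - ∑ i ∈ s, w i • x i‖ ≤
      ‖y - q - ∑ i ∈ s, w i • v i‖ + ∑ i ∈ s, w i * ‖x i - q - v i‖ := by
  have decomposition : y - ∑ i ∈ s, w i • x i =
      (y - q - ∑ i ∈ s, w i • v i) - ∑ i ∈ s, w i • (x i - q - v i) := by
    simp only [smul_sub, Finset.sum_sub_distrib, ← Finset.sum_smul, hw1, one_smul]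
    abel
  rw [decomposition]
  refine (norm_sub_le _ _).trans (add_le_add_right (norm_sum_le_of_le s fun i hi ↦ ?_) _)
  rw [norm_smul, Real.norm_of_nonneg (hw i hi)]

theorem curve_average_distance_bound_general [Fintype ι] {w : ι → ℝ} (hw : ∀ i, 0 ≤ w i)
    (hw1 : ∑ i, w i = 1) {κ : ℝ} (hκ : 0 ≤ κ) {q : E}
    {c c' c'' : ι → ℝ → E} {cs cs' cs'' : ℝ → E}
    (hc0 : ∀ i, c i 0 = q)
    (hc : ∀ i, ∀ t ∈ Icc (0 : ℝ) 1, HasDerivWithinAt (c i) (c' i t) (Icc 0 1) t)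
    (hc' : ∀ i, ∀ t ∈ Icc (0 : ℝ) 1, HasDerivWithinAt (c' i) (c'' i t) (Icc 0 1) t)
    (hc'' : ∀ i, ∀ t ∈ Icc (0 : ℝ) 1, ‖c'' i t‖ ≤ κ * ‖c' i 0‖ ^ 2)
    (hcs0 : cs 0 = q)
    (hcs : ∀ t ∈ Icc (0 : ℝ) 1, HasDerivWithinAt cs (cs' t) (Icc 0 1) t)
    (hcs' : ∀ t ∈ Icc (0 : ℝ) 1, HasDerivWithinAt cs' (cs'' t) (Icc 0 1) t)
    (hcs'0 : cs' 0 = ∑ i, w i • c' i 0)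
    (hcs'' : ∀ t ∈ Icc (0 : ℝ) 1, ‖cs'' t‖ ≤ κ * ‖cs' 0‖ ^ 2) :
    ‖cs 1 - ∑ i, w i • c i 1‖ ≤ κ * ∑ i, w i * ‖c' i 0‖ ^ 2 := by
  have taylor {f f' f'' : ℝ → E} (hf0 : f 0 = q)
      (hf : ∀ t ∈ Icc (0 : ℝ) 1, HasDerivWithinAt f (f' t) (Icc 0 1) t)
      (hf' : ∀ t ∈ Icc (0 : ℝ) 1, HasDerivWithinAt f' (f'' t) (Icc 0 1) t)
      (hf'' : ∀ t ∈ Icc (0 : ℝ) 1, ‖f'' t‖ ≤ κ * ‖f' 0‖ ^ 2) :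
      ‖f 1 - q - f' 0‖ ≤ κ / 2 * ‖f' 0‖ ^ 2 := by
    simpa [hf0, mul_div_right_comm] using norm_sub_sub_smul_le_of_norm_deriv2_le_segment hf hf'
      (fun t ht ↦ hf'' t (Ico_subset_Icc_self ht)) 1 (right_mem_Icc.2 zero_le_one)
  calc ‖cs 1 - ∑ i, w i • c i 1‖
      ≤ ‖cs 1 - q - cs' 0‖ + ∑ i, w i * ‖c i 1 - q - c' i 0‖ := by
        rw [hcs'0]
        exact norm_sub_sum_smul_le (fun i _ ↦ hw i) hw1 _ q _ _
    _ ≤ κ / 2 * ‖cs' 0‖ ^ 2 + ∑ i, w i * (κ / 2 * ‖c' i 0‖ ^ 2) := by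
        gcongr with i
        · exact taylor hcs0 hcs hcs' hcs''
        · exact hw i
        · exact taylor (hc0 i) (hc i) (hc' i) (hc'' i)
    _ ≤ κ / 2 * ∑ i, w i * ‖c' i 0‖ ^ 2 + ∑ i, w i * (κ / 2 * ‖c' i 0‖ ^ 2) := by
        rw [hcs'0]
        gcongr
        exact norm_sum_smul_sq_le (fun i _ ↦ hw i) hw1 _
    _ = κ * ∑ i, w i * ‖c' i 0‖ ^ 2 := by
        simp only [mul_left_comm (w _), ← Finset.mul_sum]
        ring

end

/-- **Curve-level inequality underlying the signal-average lemma.**  Let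
`c_i : [0,1] → ℝ^D` be twice continuously differentiable curves starting at `q`
with `‖c_i''(t)‖ ≤ κ‖c_i'(0)‖²`, and let `c_*` be a twice continuously
differentiable curve with `c_*(0) = q`, `c_*'(0) = (1/N) ∑ c_i'(0)` and
`‖c_*''(t)‖ ≤ κ‖c_*'(0)‖²`.  Then
`‖c_*(1) - (1/N) ∑ c_i(1)‖ ≤ (κ/N) ∑ ‖c_i'(0)‖²`. -/
theorem curve_average_distance_bound (D N : ℕ) (hD : 1 ≤ D) (hN : 1 ≤ N)
    (κ : ℝ) (hκ : 0 ≤ κ) (q : EuclideanSpace ℝ (Fin D))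
    (c c' c'' : Fin N → ℝ → EuclideanSpace ℝ (Fin D))
    (cs cs' cs'' : ℝ → EuclideanSpace ℝ (Fin D))
    (hc0 : ∀ i, c i 0 = q)
    (hcd : ∀ i, ∀ t ∈ Icc (0 : ℝ) 1, HasDerivWithinAt (c i) (c' i t) (Icc 0 1) t)
    (hcd2 : ∀ i, ∀ t ∈ Icc (0 : ℝ) 1, HasDerivWithinAt (c' i) (c'' i t) (Icc 0 1) t)
    (hccont : ∀ i, ContinuousOn (c'' i) (Icc 0 1))
    (hcb : ∀ i, ∀ t ∈ Icc (0 : ℝ) 1, ‖c'' i t‖ ≤ κ * ‖c' i 0‖ ^ 2)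
    (hcs0 : cs 0 = q)
    (hcsd : ∀ t ∈ Icc (0 : ℝ) 1, HasDerivWithinAt cs (cs' t) (Icc 0 1) t)
    (hcsd2 : ∀ t ∈ Icc (0 : ℝ) 1, HasDerivWithinAt cs' (cs'' t) (Icc 0 1) t)
    (hcscont : ContinuousOn cs'' (Icc 0 1))
    (hcs'0 : cs' 0 = (N : ℝ)⁻¹ • ∑ i, c' i 0)
    (hcsb : ∀ t ∈ Icc (0 : ℝ) 1, ‖cs'' t‖ ≤ κ * ‖cs' 0‖ ^ 2) :
    ‖cs 1 - (N : ℝ)⁻¹ • ∑ i, c i 1‖ ≤ (κ / N) * ∑ i, ‖c' i 0‖ ^ 2 := by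
  simpa only [← Finset.smul_sum, ← Finset.mul_sum, div_eq_mul_inv, mul_assoc] using
    curve_average_distance_bound_general (w := fun _ ↦ (N : ℝ)⁻¹) (fun _ ↦ by positivity)
      (by simp [Nat.one_le_iff_ne_zero.1 hN]) hκ hc0 hcd hcd2 hcb hcs0 hcsd hcsd2
      (hcs'0.trans Finset.smul_sum) hcsb
end

section
/- For every positive integer n, one has √(2π) · n^{n + 1/2} · e^{−n + 1/(12n+1)} ≤ n! ≤ √(2π) · n^{n + 1/2} · e^{−n + 1/(12n)}. Equivalently, n! = √(2π) n^{n+1/2} e^{−n + ε_n} for some ε_n with 1/(12n+1) ≤ ε_n ≤ 1/(12n). -/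
/-!
Robbins' argument. If `u` and `v` converge to `a` and `b` and the decrements of `u` are at most
those of `v`, then summing the decrements gives `u n - a ≤ v n - b`. Take `log (stirlingSeq n)`,
which tends to `log √π`, as one of the sequences and `1 / (12n)` or `1 / (12n + 1)` as the other.
The decrement of `log (stirlingSeq n)` is `∑ (2k + 1)⁻¹ (2n + 1)^(-2k)` over `k ≥ 1`: it is at
most the sum of the geometric series with `1/3` in place of `(2k + 1)⁻¹`, which is
`1 / (12n) - 1 / (12(n + 1))`, and its first term alone exceeds
`1 / (12n + 1) - 1 / (12(n + 1) + 1)`.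
-/

open Filter Real Stirling
open scoped Topology

lemma sub_le_sub_iff_sub_le_sub_comm {G : Type*} [AddCommGroup G] [PartialOrder G]
    [IsOrderedAddMonoid G] {a b c d : G} : a - b ≤ c - d ↔ a - c ≤ b - d := by
  rw [sub_le_sub_iff, sub_le_sub_iff, add_comm c b]

lemma sub_le_sub_of_tendsto_of_sub_succ_le_sub_succ {G : Type*} [AddCommGroup G] [PartialOrder G]
    [IsOrderedAddMonoid G] [TopologicalSpace G] [ContinuousSub G] [OrderClosedTopology G]
    {u v : ℕ → G} {a b : G} {n : ℕ} (hu : Tendsto u atTop (𝓝 a)) (hv : Tendsto v atTop (𝓝 b))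
    (h : ∀ k ≥ n, u k - u (k + 1) ≤ v k - v (k + 1)) :
    u n - a ≤ v n - b := by
  have hstep (k : ℕ) (hk : n ≤ k) : u k - v k ≤ u (k + 1) - v (k + 1) :=
    sub_le_sub_iff_sub_le_sub_comm.mp (h k hk)
  have hmono (k : ℕ) (hk : n ≤ k) : u n - v n ≤ u k - v k :=
    Nat.le_induction le_rfl (fun k hk ih => ih.trans (hstep k hk)) k hk
  have hlim : u n - v n ≤ a - b :=
    ge_of_tendsto (hu.sub hv) (eventually_atTop.mpr ⟨n, hmono⟩)
  exact sub_le_sub_iff_sub_le_sub_comm.mpr hlim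

lemma tendsto_one_div_mul_natCast_add_atTop_nhds_zero {𝕜 : Type*} [Field 𝕜] [LinearOrder 𝕜]
    [IsStrictOrderedRing 𝕜] [Archimedean 𝕜] [TopologicalSpace 𝕜] [OrderTopology 𝕜]
    {a : 𝕜} (ha : 0 < a) (b : 𝕜) :
    Tendsto (fun n : ℕ => 1 / (a * n + b)) atTop (𝓝 0) :=
  (tendsto_atTop_add_const_right _ b
    (tendsto_natCast_atTop_atTop.const_mul_atTop ha)).const_div_atTop 1

lemma tendsto_log_stirlingSeq : Tendsto (fun n => log (stirlingSeq n)) atTop (𝓝 (log √π)) :=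
  tendsto_stirlingSeq_sqrt_pi.log (by positivity)

lemma stirlingSeq_pos {n : ℕ} (hn : n ≠ 0) : 0 < stirlingSeq n :=
  (sqrt_pos.mpr pi_pos).trans_le (sqrt_pi_le_stirlingSeq hn)

lemma one_div_three_mul_sq_le_log_stirlingSeq_sdiff {n : ℕ} (hn : n ≠ 0) :
    1 / (3 * (2 * (n : ℝ) + 1) ^ 2) ≤ log (stirlingSeq n) - log (stirlingSeq (n + 1)) := by
  obtain ⟨m, rfl⟩ := Nat.exists_eq_add_one_of_ne_zero hn
  calc 1 / (3 * (2 * ((m + 1 : ℕ) : ℝ) + 1) ^ 2)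
      = 1 / (2 * ((0 + 1 : ℕ) : ℝ) + 1) * ((1 / (2 * ((m + 1 : ℕ) : ℝ) + 1)) ^ 2) ^ (0 + 1) := by
        simp only [zero_add, Nat.cast_one, pow_one]
        field_simp
        norm_num
    _ ≤ log (stirlingSeq (m + 1)) - log (stirlingSeq (m + 2)) :=
        le_hasSum (log_stirlingSeq_sdiff_hasSum m) 0 fun _ _ => by positivity

lemma one_div_sub_one_div_le_one_div_three_mul_sq {x : ℝ} (hx : 1 ≤ x) :
    1 / (12 * x + 1) - 1 / (12 * (x + 1) + 1) ≤ 1 / (3 * (2 * x + 1) ^ 2) := by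
  rw [div_sub_div _ _ (by positivity) (by positivity),
    div_le_div_iff₀ (by positivity) (by positivity)]
  -- With `m = 2 * x + 1` this is `36 * m ^ 2 ≤ (6 * m - 5) * (6 * m + 7)`, i.e. `35 ≤ 12 * m`.
  nlinarith

lemma sqrt_pi_mul_exp_le_stirlingSeq {n : ℕ} (hn : n ≠ 0) :
    √π * exp (1 / (12 * (n : ℝ) + 1)) ≤ stirlingSeq n := by
  have hdecr (k : ℕ) (hk : n ≤ k) :
      1 / (12 * (k : ℝ) + 1) - 1 / (12 * ((k + 1 : ℕ) : ℝ) + 1) ≤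
        log (stirlingSeq k) - log (stirlingSeq (k + 1)) := by
    have hk1 : 1 ≤ k := by omega
    rw [Nat.cast_succ]
    exact (one_div_sub_one_div_le_one_div_three_mul_sq (by exact_mod_cast hk1)).trans
      (one_div_three_mul_sq_le_log_stirlingSeq_sdiff (by omega))
  have hlog := sub_le_sub_of_tendsto_of_sub_succ_le_sub_succ
    (tendsto_one_div_mul_natCast_add_atTop_nhds_zero (by norm_num) 1) tendsto_log_stirlingSeq hdecr
  rwa [sub_zero, ← log_div (stirlingSeq_pos hn).ne' (by positivity),
    le_log_iff_exp_le (div_pos (stirlingSeq_pos hn) (by positivity)),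
    le_div_iff₀' (by positivity)] at hlog

lemma stirlingSeq_le_sqrt_pi_mul_exp {n : ℕ} (hn : n ≠ 0) :
    stirlingSeq n ≤ √π * exp (1 / (12 * (n : ℝ))) := by
  have hlim : Tendsto (fun k : ℕ => 1 / (12 * (k : ℝ))) atTop (𝓝 0) := by
    simpa only [add_zero] using
      tendsto_one_div_mul_natCast_add_atTop_nhds_zero (by norm_num : (0 : ℝ) < 12) 0
  have hdecr (k : ℕ) (hk : n ≤ k) :
      log (stirlingSeq k) - log (stirlingSeq (k + 1)) ≤
        1 / (12 * (k : ℝ)) - 1 / (12 * ((k + 1 : ℕ) : ℝ)) := by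
    have hk0 : (k : ℝ) ≠ 0 := by norm_cast; omega
    calc log (stirlingSeq k) - log (stirlingSeq (k + 1))
        ≤ 1 / (12 * k * (k + 1)) := log_stirlingSeq_sdiff_le k
      _ = 1 / (12 * (k : ℝ)) - 1 / (12 * ((k + 1 : ℕ) : ℝ)) := by
          rw [Nat.cast_succ]
          field_simp
          ring
  have hlog := sub_le_sub_of_tendsto_of_sub_succ_le_sub_succ tendsto_log_stirlingSeq hlim hdecr
  rwa [sub_zero, ← log_div (stirlingSeq_pos hn).ne' (by positivity),
    log_le_iff_le_exp (div_pos (stirlingSeq_pos hn) (by positivity)),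
    div_le_iff₀' (by positivity)] at hlog

lemma sqrt_two_mul_pi_mul_rpow_mul_exp {x : ℝ} (hx : 0 ≤ x) (ε : ℝ) :
    √(2 * π) * x ^ (x + 1 / 2) * exp (-x + ε) =
      √(2 * x) * (x / exp 1) ^ x * (√π * exp ε) := by
  rw [rpow_add_of_nonneg hx hx (by norm_num), ← sqrt_eq_rpow, exp_add, exp_neg,
    div_rpow hx (exp_nonneg 1), exp_one_rpow, sqrt_mul zero_le_two, sqrt_mul zero_le_two]
  ring

/-- **Refined two-sided Stirling approximation.**  For every positive integer `n`,
`√(2π) n^(n+1/2) e^(-n + 1/(12n+1)) ≤ n! ≤ √(2π) n^(n+1/2) e^(-n + 1/(12n))`. -/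
theorem stirling_two_sided (n : ℕ) (hn : 0 < n) :
    Real.sqrt (2 * Real.pi) * (n : ℝ) ^ ((n : ℝ) + 1 / 2) *
        Real.exp (-(n : ℝ) + 1 / (12 * (n : ℝ) + 1)) ≤ (Nat.factorial n : ℝ) ∧
    (Nat.factorial n : ℝ) ≤
      Real.sqrt (2 * Real.pi) * (n : ℝ) ^ ((n : ℝ) + 1 / 2) *
        Real.exp (-(n : ℝ) + 1 / (12 * (n : ℝ))) := by
  have hscale : 0 < √(2 * n) * (n / exp 1) ^ n := by positivity
  rw [sqrt_two_mul_pi_mul_rpow_mul_exp n.cast_nonneg,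
    sqrt_two_mul_pi_mul_rpow_mul_exp n.cast_nonneg, rpow_natCast,
    ← le_div_iff₀' hscale, ← div_le_iff₀' hscale, ← stirlingSeq]
  exact ⟨sqrt_pi_mul_exp_le_stirlingSeq hn.ne', stirlingSeq_le_sqrt_pi_mul_exp hn.ne'⟩
end
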